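/- For every integer α with 4 ≤ α ≤ 18 and every nonnegative integer N, the equation x² + αy² + (3z² − 2z) + 3(3t² − 2t) = N has an integer solution in ℤ⁴; and for every integer β with 3 ≤ β ≤ 18 and every nonnegative integer N, the equation x² + (3y² − 2y) + 3(3z² − 2z) + β(3t² − 2t) = N has an integer solution in ℤ⁴. That is, the quaternary mixed sums x²+αy²+P₈(z)+3P₈(t) (4 ≤ α ≤ 18) and x²+P₈(y)+3P₈(z)+βP₈(t) (3 ≤ β ≤ 18) are universal. -/

import Mathlib

/-!
Completing the square turns `x² + P₈(z) + 3P₈(t) = N` into `3N + 4 = u² + 3x² + 3v²` with `3 ∤ v`.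

Every `m ≡ 1 (mod 3)` has the form `u² + 3x² + 3v²`: Dirichlet's theorem and quadratic reciprocity
yield a positive ternary form of determinant `3` that takes the value `3m` but not the value `6`;
Hermite reduction leaves only two classes of determinant `3`, and the one other than
`p² + q² + 3r²` takes the value `6`; finally `3m = p² + q² + 3r²` forces `3 ∣ p, q`.

If `x` and `v` are both divisible by `3`, reflecting `(u, x, v)` in a short vector whose norm
divides `6ℓ` destroys this, and for `ℓ = 7, 11` such a reflection is integral as soon as `-m` is a
square modulo `ℓ`. Over a finite field a nonconstant quadratic polynomial meets every translate of
the squares, so the free fourth variable moves a large `N` into such a residue class, while among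
the small values of `N` only `18` escapes.
-/

open NumberTheorySymbols

/-! ### Reduction of positive ternary forms -/

lemma exists_two_mul_abs_add_mul_le {a : ℤ} (ha : 0 < a) (t : ℤ) : ∃ k, 2 * |t + a * k| ≤ a := by
  refine ⟨-((2 * t + a) / (2 * a)), ?_⟩
  have hdiv := Int.mul_ediv_add_emod (2 * t + a) (2 * a)
  have hnonneg := Int.emod_nonneg (2 * t + a) (by lia : 2 * a ≠ 0)
  have hlt := Int.emod_lt_of_pos (2 * t + a) (by lia : 0 < 2 * a)
  have hbounds : |2 * (t + a * -((2 * t + a) / (2 * a)))| ≤ a :=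
    abs_le.mpr ⟨by linarith, by linarith⟩
  rwa [abs_mul, abs_two] at hbounds

/-- The integral ternary quadratic form
`a x² + b y² + c z² + 2 r y z + 2 s x z + 2 t x y`, given by the entries of its Gram matrix. -/
structure TernaryForm where
  (a b c r s t : ℤ)

namespace TernaryForm

variable (Q : TernaryForm)

/-- The value of the form at `(x, y, z)`. -/
def eval (x y z : ℤ) : ℤ :=
  Q.a * x ^ 2 + Q.b * y ^ 2 + Q.c * z ^ 2 + 2 * (Q.r * (y * z) + Q.s * (x * z) + Q.t * (x * y))

/-- The set of integers represented by the form, zero included. -/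
def values : Set ℤ := {n | ∃ x y z, Q.eval x y z = n}

/-- The leading `2 × 2` minor of the Gram matrix. -/
def minor : ℤ := Q.a * Q.b - Q.t ^ 2

/-- The determinant of the Gram matrix. -/
def det : ℤ :=
  Q.a * Q.b * Q.c + 2 * Q.r * Q.s * Q.t - Q.a * Q.r ^ 2 - Q.b * Q.s ^ 2 - Q.c * Q.t ^ 2

/-- Positive definiteness, expressed by Sylvester's criterion. -/
structure PosDef : Prop where
  a_pos : 0 < Q.a
  minor_pos : 0 < Q.minor
  det_pos : 0 < Q.det

/-- Hermite reducedness: both `Q` and the binary form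
`Q.minor y² + 2 (a r - s t) y z + (a c - s²) z²` that remains of `a Q` after completing the square
in `x` satisfy Lagrange's inequalities. -/
structure IsReduced : Prop where
  two_mul_abs_t_le : 2 * |Q.t| ≤ Q.a
  two_mul_abs_s_le : 2 * |Q.s| ≤ Q.a
  a_le_b : Q.a ≤ Q.b
  two_mul_abs_le_minor : 2 * |Q.a * Q.r - Q.s * Q.t| ≤ Q.minor
  minor_le : Q.minor ≤ Q.a * Q.c - Q.s ^ 2

/-- The positive definite forms sharing determinant and values with `Q`; of the equivalence of
forms, these are the only consequences that matter here. -/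
structure Similar (Q' : TernaryForm) : Prop where
  posDef : Q'.PosDef
  det_eq : Q'.det = Q.det
  values_eq : Q'.values = Q.values

/-- The form `Q(y, x, z)`. -/
def swapXY : TernaryForm := ⟨Q.b, Q.a, Q.c, Q.s, Q.r, Q.t⟩

/-- The form `Q(x, z, y)`. -/
def swapYZ : TernaryForm := ⟨Q.a, Q.c, Q.b, Q.r, Q.t, Q.s⟩

/-- The form `Q(x + i y + j z, y + k z, z)`. -/
def shear (i j k : ℤ) : TernaryForm where
  a := Q.a
  b := Q.eval i 1 0
  c := Q.eval j k 1
  r := Q.a * i * j + Q.b * k + Q.r + Q.s * i + Q.t * (i * k + j)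
  s := Q.a * j + Q.s + Q.t * k
  t := Q.t + Q.a * i

variable {Q} {Q' : TernaryForm}

lemma minor_mul_sub_sq :
    Q.minor * (Q.a * Q.c - Q.s ^ 2) - (Q.a * Q.r - Q.s * Q.t) ^ 2 = Q.a * Q.det := by
  unfold minor det; ring

lemma PosDef.a_mul_c_sub_sq_pos (hQ : Q.PosDef) : 0 < Q.a * Q.c - Q.s ^ 2 := by
  have hpos : 0 < Q.minor * (Q.a * Q.c - Q.s ^ 2) := by
    linarith [Q.minor_mul_sub_sq, mul_pos hQ.a_pos hQ.det_pos, sq_nonneg (Q.a * Q.r - Q.s * Q.t)]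
  exact pos_of_mul_pos_right hpos hQ.minor_pos.le

lemma PosDef.b_pos (hQ : Q.PosDef) : 0 < Q.b := by
  have hpos : 0 < Q.a * Q.b := by
    linarith [show 0 < Q.a * Q.b - Q.t ^ 2 from hQ.minor_pos, sq_nonneg Q.t]
  exact pos_of_mul_pos_right hpos hQ.a_pos.le

lemma PosDef.similar_swapXY (hQ : Q.PosDef) : Q.Similar Q.swapXY where
  posDef.a_pos := hQ.b_pos
  posDef.minor_pos := by
    have := hQ.minor_pos
    unfold minor swapXY at *
    linarith
  posDef.det_pos := by
    have := hQ.det_pos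
    unfold det swapXY at *
    linarith
  det_eq := by unfold det swapXY; ring
  values_eq := by
    ext n
    constructor <;> rintro ⟨x, y, z, rfl⟩ <;> exact ⟨y, x, z, by unfold eval swapXY; ring⟩

lemma PosDef.similar_swapYZ (hQ : Q.PosDef) : Q.Similar Q.swapYZ where
  posDef.a_pos := hQ.a_pos
  posDef.minor_pos := hQ.a_mul_c_sub_sq_pos
  posDef.det_pos := by
    have := hQ.det_pos
    unfold det swapYZ at *
    linarith
  det_eq := by unfold det swapYZ; ring
  values_eq := by
    ext n
    constructor <;> rintro ⟨x, y, z, rfl⟩ <;> exact ⟨x, z, y, by unfold eval swapYZ; ring⟩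

lemma minor_shear (i j k : ℤ) : (Q.shear i j k).minor = Q.minor := by
  simp only [minor, shear, eval]; ring

lemma det_shear (i j k : ℤ) : (Q.shear i j k).det = Q.det := by
  simp only [det, shear, eval]; ring

lemma eval_shear (i j k x y z : ℤ) :
    (Q.shear i j k).eval x y z = Q.eval (x + i * y + j * z) (y + k * z) z := by
  simp only [shear, eval]; ring

lemma PosDef.similar_shear (hQ : Q.PosDef) (i j k : ℤ) : Q.Similar (Q.shear i j k) where
  posDef := ⟨hQ.a_pos, by simpa only [minor_shear] using hQ.minor_pos,
    by simpa only [det_shear] using hQ.det_pos⟩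
  det_eq := det_shear i j k
  values_eq := by
    ext n
    constructor
    · rintro ⟨x, y, z, rfl⟩
      exact ⟨_, _, _, (eval_shear i j k x y z).symm⟩
    · rintro ⟨x, y, z, rfl⟩
      refine ⟨x - i * (y - k * z) - j * z, y - k * z, z, ?_⟩
      rw [eval_shear]
      congr 1 <;> ring

lemma Similar.trans {Q'' : TernaryForm} (h : Q.Similar Q') (h' : Q'.Similar Q'') :
    Q.Similar Q'' :=
  ⟨h'.posDef, h'.det_eq.trans h.det_eq, h'.values_eq.trans h.values_eq⟩

lemma PosDef.exists_shear_bounds (hQ : Q.PosDef) :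
    ∃ i j k, 2 * |(Q.shear i j k).t| ≤ Q.a ∧ 2 * |(Q.shear i j k).s| ≤ Q.a ∧
      2 * |(Q.shear i j k).a * (Q.shear i j k).r - (Q.shear i j k).s * (Q.shear i j k).t| ≤
        Q.minor := by
  obtain ⟨i, hi⟩ := exists_two_mul_abs_add_mul_le hQ.a_pos Q.t
  obtain ⟨k, hk⟩ := exists_two_mul_abs_add_mul_le hQ.minor_pos (Q.a * Q.r - Q.s * Q.t)
  obtain ⟨j, hj⟩ := exists_two_mul_abs_add_mul_le hQ.a_pos (Q.s + Q.t * k)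
  refine ⟨i, j, k, hi, ?_, ?_⟩
  · convert hj using 3
    simp only [shear]; ring
  · convert hk using 3
    simp only [shear, minor]; ring

lemma PosDef.exists_isReduced (hQ : Q.PosDef) : ∃ Q', Q.Similar Q' ∧ Q'.IsReduced := by
  obtain ⟨P, hP, hmin⟩ := exists_minimalFor_of_wellFoundedLT Q.Similar
    (fun Q' ↦ toLex (Q'.a.toNat, Q'.minor.toNat)) ⟨Q, hQ, rfl, rfl⟩
  have hmin' {P' : TernaryForm} (hP' : Q.Similar P') :
      P.a ≤ P'.a ∧ (P'.a = P.a → P.minor ≤ P'.minor) := by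
    have hlex := fun hle ↦ hmin hP' hle
    have := hP.posDef.a_pos
    have := hP.posDef.minor_pos
    have := hP'.posDef.a_pos
    simp only [Prod.Lex.toLex_le_toLex] at hlex
    grind
  obtain ⟨i, j, k, ht, hs, hr⟩ := hP.posDef.exists_shear_bounds
  have hR := hP.trans (hP.posDef.similar_shear i j k)
  set R := P.shear i j k
  have hRminor : R.minor = P.minor := minor_shear i j k
  have hswapXY := hmin' (hR.trans hR.posDef.similar_swapXY)
  have hswapYZ := hmin' (hR.trans hR.posDef.similar_swapYZ)
  exact ⟨R, hR, ht, hs, hswapXY.1, hr.trans_eq hRminor.symm, hRminor.trans_le (hswapYZ.2 rfl)⟩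

lemma IsReduced.three_mul_a_sq_le (hred : Q.IsReduced) : 3 * Q.a ^ 2 ≤ 4 * Q.minor := by
  have ht : (2 * Q.t) ^ 2 ≤ Q.a ^ 2 :=
    sq_le_sq' (by linarith [hred.two_mul_abs_t_le, neg_abs_le Q.t])
      (by linarith [hred.two_mul_abs_t_le, le_abs_self Q.t])
  have ha : 0 ≤ Q.a := by linarith [hred.two_mul_abs_t_le, abs_nonneg Q.t]
  unfold minor
  nlinarith [mul_le_mul_of_nonneg_left hred.a_le_b ha]

lemma IsReduced.three_mul_minor_sq_le (hred : Q.IsReduced) :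
    3 * Q.minor ^ 2 ≤ 4 * (Q.a * Q.det) := by
  have hR := hred.two_mul_abs_le_minor
  have hsq : (2 * (Q.a * Q.r - Q.s * Q.t)) ^ 2 ≤ Q.minor ^ 2 :=
    sq_le_sq' (by linarith [neg_abs_le (Q.a * Q.r - Q.s * Q.t)])
      (by linarith [le_abs_self (Q.a * Q.r - Q.s * Q.t)])
  have hminor : 0 ≤ Q.minor := by linarith [abs_nonneg (Q.a * Q.r - Q.s * Q.t)]
  nlinarith [mul_le_mul_of_nonneg_left hred.minor_le hminor, Q.minor_mul_sub_sq]

lemma IsReduced.hermite_bound (hred : Q.IsReduced) (hQ : Q.PosDef) :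
    27 * Q.a ^ 3 ≤ 64 * Q.det := by
  have hminor : (3 * Q.a ^ 2) ^ 2 ≤ (4 * Q.minor) ^ 2 :=
    pow_le_pow_left₀ (by positivity) hred.three_mul_a_sq_le 2
  refine le_of_mul_le_mul_left ?_ hQ.a_pos
  linarith [hred.three_mul_minor_sq_le]

lemma IsReduced.eq_of_det_eq_three (hred : Q.IsReduced) (hQ : Q.PosDef) (hdet : Q.det = 3) :
    Q = ⟨1, 1, 3, 0, 0, 0⟩ ∨ Q = ⟨1, 2, 2, 1, 0, 0⟩ ∨ Q = ⟨1, 2, 2, -1, 0, 0⟩ := by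
  have ha : Q.a = 1 := by
    have := hred.hermite_bound hQ
    have := hQ.a_pos
    nlinarith [sq_nonneg (Q.a - 2)]
  have hminor := hred.three_mul_minor_sq_le
  have hminor_pos := hQ.minor_pos
  have hrel := Q.minor_mul_sub_sq
  have hr := hred.two_mul_abs_le_minor
  obtain ⟨ht, hs, -, -, -⟩ := hred
  obtain ⟨a, b, c, r, s, t⟩ := Q
  obtain rfl : a = 1 := ha
  obtain rfl : t = 0 := abs_nonpos_iff.mp (by lia)
  obtain rfl : s = 0 := abs_nonpos_iff.mp (by lia)
  simp only [minor, hdet, mk.injEq] at *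
  have hb : b ≤ 2 := by nlinarith
  obtain rfl | rfl : b = 1 ∨ b = 2 := by lia
  · obtain rfl : r = 0 := abs_nonpos_iff.mp (by lia)
    lia
  · have hr_le := abs_le.mp (by lia : |r| ≤ 1)
    obtain rfl | rfl | rfl : r = 0 ∨ r = 1 ∨ r = -1 := by lia
    all_goals lia

lemma PosDef.values_of_det_eq_three (hQ : Q.PosDef) (hdet : Q.det = 3) :
    Q.values = {n | ∃ x y z, n = x ^ 2 + y ^ 2 + 3 * z ^ 2} ∨ 6 ∈ Q.values := by
  obtain ⟨Q', hsim, hred⟩ := hQ.exists_isReduced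
  rw [← hsim.values_eq]
  rcases hred.eq_of_det_eq_three hsim.posDef (hsim.det_eq.trans hdet) with rfl | rfl | rfl
  · left
    ext n
    simp [values, eval, eq_comm]
  · exact .inr ⟨0, 1, 1, rfl⟩
  · exact .inr ⟨0, 1, -1, rfl⟩

lemma six_notMem_values (hminor : Q.minor % 3 = 1) (hc : Q.c % 9 = 3) (hr : 3 ∣ Q.r)
    (hs : 3 ∣ Q.s) : 6 ∉ Q.values := by
  rintro ⟨x, y, z, hxyz⟩
  obtain ⟨a, b, c, r, s, t⟩ := Q
  obtain ⟨r, rfl⟩ := hr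
  obtain ⟨s, rfl⟩ := hs
  obtain ⟨c, rfl⟩ : ∃ k, c = 9 * k + 3 := ⟨c / 9, by lia⟩
  simp only [minor, eval] at hminor hxyz
  have hbinary : ∀ a b t x y : ZMod 3, a * b - t ^ 2 = 1 →
      a * x ^ 2 + b * y ^ 2 + 2 * (t * (x * y)) = 0 → x = 0 ∧ y = 0 := by
    decide
  obtain ⟨hx, hy⟩ := hbinary a b t x y
    (by exact_mod_cast (ZMod.intCast_eq_intCast_iff (a * b - t ^ 2) 1 3).mpr hminor)
    (by
      have hdvd : (3 : ℤ) ∣ a * x ^ 2 + b * y ^ 2 + 2 * (t * (x * y)) := by grind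
      exact_mod_cast (ZMod.intCast_zmod_eq_zero_iff_dvd _ 3).mpr hdvd)
  obtain ⟨x, rfl⟩ := (ZMod.intCast_zmod_eq_zero_iff_dvd x 3).mp hx
  obtain ⟨y, rfl⟩ := (ZMod.intCast_zmod_eq_zero_iff_dvd y 3).mp hy
  have hz : z ^ 2 % 3 ≠ 2 := by
    have : z % 3 = 0 ∨ z % 3 = 1 ∨ z % 3 = 2 := by lia
    rcases this with h | h | h <;> simp [pow_two, Int.mul_emod, h]
  apply hz
  grind

end TernaryForm

/-! ### Numbers of the form `u² + 3x² + 3v²` -/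

lemma exists_dvd_sq_add_of_jacobiSym_eq_one {b : ℤ} {p : ℕ} [Fact p.Prime] (h : J(-b | p) = 1) :
    ∃ g : ℤ, (p : ℤ) ∣ g ^ 2 + b := by
  obtain ⟨y, hy⟩ := ZMod.isSquare_of_jacobiSym_eq_one h
  obtain ⟨g, rfl⟩ := ZMod.intCast_surjective y
  refine ⟨g, (ZMod.intCast_zmod_eq_zero_iff_dvd _ p).mp ?_⟩
  push_cast at hy ⊢
  linear_combination -hy

lemma jacobiSym_neg_three_of_mod_six_eq_one {n : ℕ} (hn : n % 6 = 1) : J(-3 | n) = 1 := by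
  rw [jacobiSym.mod_right _ (Nat.odd_iff.mpr (by lia))]
  have hmod : n % (4 * (-3 : ℤ).natAbs) = 1 ∨ n % (4 * (-3 : ℤ).natAbs) = 7 := by
    norm_num; lia
  rcases hmod with h | h <;> rw [h] <;> norm_num

lemma exists_prime_three_mul_add_one_eq {m : ℕ} (hm : m % 3 = 1) :
    ∃ p b : ℕ, p.Prime ∧ b % 6 = 1 ∧ 3 * p + 1 = 4 * m * b := by
  obtain ⟨a, ha⟩ : ∃ a, 3 * a + 1 = 4 * m := ⟨(4 * m - 1) / 3, by lia⟩
  have hcop : a.Coprime (2 * (4 * m)) := by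
    refine .mul_right (Nat.coprime_two_right.mpr (Nat.odd_iff.mpr (by lia))) ?_
    rw [← ha, Nat.coprime_mul_right_add_right]
    exact Nat.coprime_one_right a
  obtain ⟨p, hpa, hp, hmod⟩ := Nat.forall_exists_prime_gt_and_modEq a (by lia) hcop
  obtain ⟨j, hj⟩ := (Nat.modEq_iff_dvd' hpa.le).mp hmod.symm
  refine ⟨p, 6 * j + 1, hp, by lia, ?_⟩
  have hp_eq : p = a + 2 * (4 * m) * j := by lia
  rw [hp_eq]
  linarith

lemma exists_dvd_sq_add_of_three_mul_add_one_eq {m p b : ℕ} (hp : p.Prime) (hb : b % 6 = 1)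
    (h : 3 * p + 1 = 4 * m * b) : ∃ g : ℤ, (p : ℤ) ∣ g ^ 2 + b := by
  have : Fact p.Prime := ⟨hp⟩
  have hb_odd : Odd b := Nat.odd_iff.mpr (by lia)
  have hp4 : p % 4 = 1 := by
    have : 3 * p + 1 = 4 * (m * b) := by rw [h]; ring
    lia
  have hpb : J(p | b) = 1 := by
    have hmod : (-3 * (p : ℤ)) % b = 1 % b := by
      have hcast : (3 * p + 1 : ℤ) = 4 * m * b := by exact_mod_cast h
      exact Int.modEq_iff_dvd.mpr ⟨4 * m, by linear_combination hcast⟩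
    have hmul := jacobiSym.mul_left (-3) p b
    rwa [jacobiSym.mod_left' hmod, jacobiSym.one_left,
      jacobiSym_neg_three_of_mod_six_eq_one hb, one_mul, eq_comm] at hmul
  apply exists_dvd_sq_add_of_jacobiSym_eq_one
  rw [jacobiSym.neg _ (Nat.odd_iff.mpr (by lia)), ZMod.χ₄_nat_one_mod_four hp4, one_mul,
    jacobiSym.quadratic_reciprocity_one_mod_four' hb_odd hp4, hpb]

lemma three_dvd_of_three_dvd_sq_add_sq {p q : ℤ} (h : 3 ∣ p ^ 2 + q ^ 2) : 3 ∣ p ∧ 3 ∣ q := by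
  have hanisotropic : ∀ p q : ZMod 3, p ^ 2 + q ^ 2 = 0 → p = 0 ∧ q = 0 := by decide
  have hdvd := fun n : ℤ ↦ ZMod.intCast_zmod_eq_zero_iff_dvd n 3
  have hpq := hanisotropic p q (by exact_mod_cast (hdvd _).mpr h)
  exact ⟨(hdvd p).mp hpq.1, (hdvd q).mp hpq.2⟩

lemma exists_ternaryForm_of_mod_three_eq_one {m : ℕ} (hm : m % 3 = 1) :
    ∃ Q : TernaryForm, Q.PosDef ∧ Q.det = 3 ∧ 3 * (m : ℤ) ∈ Q.values ∧ 6 ∉ Q.values := by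
  obtain ⟨p, b, hp, hb, hpb⟩ := exists_prime_three_mul_add_one_eq hm
  obtain ⟨g, A, hA⟩ := exists_dvd_sq_add_of_three_mul_add_one_eq hp hb hpb
  let Q : TernaryForm := ⟨4 * A, p, 3 * m, 0, 3, 2 * g⟩
  have hminor : Q.minor = 4 * b := by
    simp only [TernaryForm.minor, Q]
    linear_combination -4 * hA
  have hdet : Q.det = 3 := by
    simp only [TernaryForm.det, Q]
    have hcast : (3 * p + 1 : ℤ) = 4 * m * b := by exact_mod_cast hpb
    linear_combination -12 * m * hA - 3 * hcast
  have hA_pos : 0 < A := by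
    have hb_pos : (0 : ℤ) < b := by lia
    have : 0 < (p : ℤ) * A := by rw [← hA]; positivity
    exact pos_of_mul_pos_right this (by positivity)
  refine ⟨Q, ⟨by simpa [Q] using hA_pos, by lia, by lia⟩, hdet, ⟨0, 0, 1, ?_⟩, ?_⟩
  · simp [TernaryForm.eval, Q]
  · exact Q.six_notMem_values (by lia) (by simp only [Q]; lia) (dvd_zero 3) (dvd_refl 3)

lemma exists_eq_sq_add_three_mul_sq_add_three_mul_sq {m : ℕ} (hm : m % 3 = 1) :
    ∃ u x v : ℤ, (m : ℤ) = u ^ 2 + 3 * x ^ 2 + 3 * v ^ 2 := by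
  obtain ⟨Q, hQ, hdet, h3m, h6⟩ := exists_ternaryForm_of_mod_three_eq_one hm
  rw [(hQ.values_of_det_eq_three hdet).resolve_right h6] at h3m
  obtain ⟨p, q, u, h⟩ := h3m
  obtain ⟨⟨x, rfl⟩, ⟨v, rfl⟩⟩ := three_dvd_of_three_dvd_sq_add_sq (by lia : 3 ∣ p ^ 2 + q ^ 2)
  exact ⟨u, x, v, by linarith⟩

/-! ### The ternary sum `x² + P₈(z) + 3P₈(t)` -/

/-- The generalized octagonal number `P₈(x)`. -/
def octagonal (x : ℤ) : ℤ := 3 * x ^ 2 - 2 * x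

/-- `N` is represented by the ternary part `x² + P₈(z) + 3P₈(t)` common to both families. -/
def IsMixedSum (N : ℤ) : Prop :=
  ∃ x z t : ℤ, x ^ 2 + octagonal z + 3 * octagonal t = N

lemma exists_three_mul_octagonal_add_one_eq_sq {u : ℤ} (hu : ¬ 3 ∣ u) :
    ∃ z, 3 * octagonal z + 1 = u ^ 2 := by
  obtain h | h : u % 3 = 1 ∨ u % 3 = 2 := by lia
  · obtain ⟨k, rfl⟩ : ∃ k, u = 3 * k + 1 := ⟨u / 3, by lia⟩
    exact ⟨-k, by unfold octagonal; ring⟩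
  · obtain ⟨k, rfl⟩ : ∃ k, u = 3 * k - 1 := ⟨u / 3 + 1, by lia⟩
    exact ⟨k, by unfold octagonal; ring⟩

lemma not_three_dvd_of_three_mul_add_four_eq {N u x v : ℤ}
    (h : 3 * N + 4 = u ^ 2 + 3 * x ^ 2 + 3 * v ^ 2) : ¬ 3 ∣ u := by
  rintro ⟨k, rfl⟩
  grind

lemma isMixedSum_of_not_three_dvd {N u x v : ℤ}
    (h : 3 * N + 4 = u ^ 2 + 3 * x ^ 2 + 3 * v ^ 2) (hxv : ¬ (3 ∣ x ∧ 3 ∣ v)) :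
    IsMixedSum N := by
  wlog hv : ¬ 3 ∣ v generalizing x v
  · exact this (x := v) (v := x) (by linarith) (by tauto) (by tauto)
  obtain ⟨z, hz⟩ :=
    exists_three_mul_octagonal_add_one_eq_sq (not_three_dvd_of_three_mul_add_four_eq h)
  obtain ⟨t, ht⟩ := exists_three_mul_octagonal_add_one_eq_sq hv
  exact ⟨x, z, t, by linarith⟩

lemma not_three_dvd_reflection_coeff {a b c u x v j : ℤ} (hu : ¬ 3 ∣ u) (hx : 3 ∣ x)
    (hv : 3 ∣ v) (ha : ¬ 9 ∣ a)
    (hj : 2 * (a * u + 3 * b * x + 3 * c * v) = (a ^ 2 + 3 * b ^ 2 + 3 * c ^ 2) * j) :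
    ¬ 3 ∣ j := by
  rintro ⟨k, rfl⟩
  obtain ⟨x, rfl⟩ := hx
  obtain ⟨v, rfl⟩ := hv
  have hmul : 3 ∣ a * u := by grind
  obtain ⟨a, rfl⟩ := (Int.prime_three.dvd_or_dvd hmul).resolve_right hu
  have hmul' : 3 ∣ a * u := by grind
  obtain ⟨a, rfl⟩ := (Int.prime_three.dvd_or_dvd hmul').resolve_right hu
  exact ha ⟨a, by ring⟩

lemma isMixedSum_of_reflection {N u x v a b c : ℤ}
    (h : 3 * N + 4 = u ^ 2 + 3 * x ^ 2 + 3 * v ^ 2) (ha : ¬ 9 ∣ a) (hbc : ¬ (3 ∣ b ∧ 3 ∣ c))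
    (hdvd : a ^ 2 + 3 * b ^ 2 + 3 * c ^ 2 ∣ 2 * (a * u + 3 * b * x + 3 * c * v)) :
    IsMixedSum N := by
  by_cases hxv : 3 ∣ x ∧ 3 ∣ v
  swap
  · exact isMixedSum_of_not_three_dvd h hxv
  obtain ⟨j, hj⟩ := hdvd
  have hj3 : ¬ 3 ∣ j :=
    not_three_dvd_reflection_coeff (not_three_dvd_of_three_mul_add_four_eq h) hxv.1 hxv.2 ha hj
  have hreflected : 3 * N + 4 =
      (u - j * a) ^ 2 + 3 * (x - j * b) ^ 2 + 3 * (v - j * c) ^ 2 := by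
    linear_combination h + j * hj
  refine isMixedSum_of_not_three_dvd hreflected fun ⟨hx', hv'⟩ ↦ hbc ?_
  rw [dvd_sub_right hxv.1] at hx'
  rw [dvd_sub_right hxv.2] at hv'
  exact ⟨(Int.prime_three.dvd_or_dvd hx').resolve_left hj3,
    (Int.prime_three.dvd_or_dvd hv').resolve_left hj3⟩

/-- Every vector of `u² + 3x² + 3v²` over `ZMod p` whose norm is minus a square is orthogonal to
the reduction of an integral vector `(a, b, c)` of norm dividing `6p` that qualifies for
`isMixedSum_of_reflection`. -/
def HasReflections (p : ℕ) : Prop :=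
  ∀ u x v : ZMod p, IsSquare (-(u ^ 2 + 3 * x ^ 2 + 3 * v ^ 2)) →
    ∃ a b c : ℤ, ¬ 9 ∣ a ∧ ¬ (3 ∣ b ∧ 3 ∣ c) ∧ a ^ 2 + 3 * b ^ 2 + 3 * c ^ 2 ∣ 6 * (p : ℤ) ∧
      (a * u + 3 * b * x + 3 * c * v : ZMod p) = 0

lemma hasReflections_seven : HasReflections 7 := by
  let W : List (ℤ × ℤ × ℤ) := [(1, 1, 1), (1, 1, -1), (1, -1, 1), (1, -1, -1),
    (2, 0, 1), (2, 0, -1), (2, 1, 0), (2, -1, 0)]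
  have hcover : ∀ u x v : ZMod 7, IsSquare (-(u ^ 2 + 3 * x ^ 2 + 3 * v ^ 2)) →
      ∃ w ∈ W, ¬ 9 ∣ w.1 ∧ ¬ (3 ∣ w.2.1 ∧ 3 ∣ w.2.2) ∧
        w.1 ^ 2 + 3 * w.2.1 ^ 2 + 3 * w.2.2 ^ 2 ∣ 6 * ((7 : ℕ) : ℤ) ∧
        (w.1 * u + 3 * w.2.1 * x + 3 * w.2.2 * v : ZMod 7) = 0 := by
    decide +kernel
  intro u x v huxv
  obtain ⟨w, -, hw⟩ := hcover u x v huxv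
  exact ⟨w.1, w.2.1, w.2.2, hw⟩

lemma hasReflections_eleven : HasReflections 11 := by
  let W : List (ℤ × ℤ × ℤ) := [(4, 1, 1), (4, 1, -1), (4, -1, 1), (4, -1, -1),
    (6, 3, 1), (6, 3, -1), (6, -3, 1), (6, -3, -1), (6, 1, 3), (6, 1, -3), (6, -1, 3), (6, -1, -3)]
  have hcover : ∀ u x v : ZMod 11, IsSquare (-(u ^ 2 + 3 * x ^ 2 + 3 * v ^ 2)) →
      ∃ w ∈ W, ¬ 9 ∣ w.1 ∧ ¬ (3 ∣ w.2.1 ∧ 3 ∣ w.2.2) ∧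
        w.1 ^ 2 + 3 * w.2.1 ^ 2 + 3 * w.2.2 ^ 2 ∣ 6 * ((11 : ℕ) : ℤ) ∧
        (w.1 * u + 3 * w.2.1 * x + 3 * w.2.2 * v : ZMod 11) = 0 := by
    decide +kernel
  intro u x v huxv
  obtain ⟨w, -, hw⟩ := hcover u x v huxv
  exact ⟨w.1, w.2.1, w.2.2, hw⟩

lemma norm_dvd_two_mul_of_norm_dvd_six_mul {p a b c u x v : ℤ} (hp3 : ¬ 3 ∣ p)
    (hnorm : a ^ 2 + 3 * b ^ 2 + 3 * c ^ 2 ∣ 6 * p)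
    (hdvd : p ∣ a * u + 3 * b * x + 3 * c * v) :
    a ^ 2 + 3 * b ^ 2 + 3 * c ^ 2 ∣ 2 * (a * u + 3 * b * x + 3 * c * v) := by
  by_cases ha3 : 3 ∣ a
  · have h3p : IsCoprime 3 p := Int.prime_three.coprime_iff_not_dvd.mpr hp3
    have h3 : 3 ∣ a * u + 3 * b * x + 3 * c * v := by
      obtain ⟨k, rfl⟩ := ha3
      exact ⟨k * u + b * x + c * v, by ring⟩
    refine hnorm.trans ?_
    rw [show 6 * p = 2 * (3 * p) by ring]
    exact mul_dvd_mul_left 2 (h3p.mul_dvd h3 hdvd)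
  · have hcop : IsCoprime (a ^ 2 + 3 * b ^ 2 + 3 * c ^ 2) 3 := by
      have ha2 : IsCoprime (a ^ 2) 3 :=
        (Int.prime_three.coprime_iff_not_dvd.mpr ha3).symm.pow_left
      rw [add_assoc, ← mul_add]
      exact ha2.add_mul_left_left _
    rw [show 6 * p = 3 * (2 * p) by ring] at hnorm
    exact (hcop.dvd_of_dvd_mul_left hnorm).trans (mul_dvd_mul_left 2 hdvd)

lemma HasReflections.isMixedSum {p : ℕ} (hp : HasReflections p) (hp3 : ¬ 3 ∣ p) {N : ℤ}
    (hN : 0 ≤ N) (hsq : IsSquare (-(3 * N + 4) : ZMod p)) : IsMixedSum N := by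
  lift N to ℕ using hN
  obtain ⟨u, x, v, h⟩ :=
    exists_eq_sq_add_three_mul_sq_add_three_mul_sq (by lia : (3 * N + 4) % 3 = 1)
  push_cast at h hsq
  have hsq' : IsSquare (-(u ^ 2 + 3 * x ^ 2 + 3 * v ^ 2) : ZMod p) := by
    convert hsq using 2
    exact_mod_cast congrArg (Int.cast : ℤ → ZMod p) h.symm
  obtain ⟨a, b, c, ha, hbc, hnorm, horth⟩ := hp u x v hsq'
  have hp_dvd : (p : ℤ) ∣ a * u + 3 * b * x + 3 * c * v :=
    (ZMod.intCast_zmod_eq_zero_iff_dvd _ p).mp (by exact_mod_cast horth)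
  exact isMixedSum_of_reflection h ha hbc
    (norm_dvd_two_mul_of_norm_dvd_six_mul (by lia) hnorm hp_dvd)

open Polynomial in
lemma exists_isSquare_quadratic {F : Type*} [Field F] [Fintype F] (hF : Fintype.card F % 2 = 1)
    {a : F} (ha : a ≠ 0) (b c : F) : ∃ y, IsSquare (a * y ^ 2 + b * y + c) := by
  obtain ⟨y, s, h⟩ := FiniteField.exists_root_sum_quadratic (degree_quadratic (b := b) (c := c) ha)
    (degree_quadratic (b := 0) (c := 0) (neg_ne_zero.mpr one_ne_zero)) hF
  refine ⟨y, s, ?_⟩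
  simp only [eval_add, eval_mul, eval_C, eval_pow, eval_X, map_neg, map_one, neg_mul, one_mul,
    map_zero, zero_mul, add_zero, eval_neg] at h
  linear_combination h

lemma HasReflections.exists_isMixedSum_sub {p : ℕ} [Fact p.Prime] (hp : HasReflections p)
    (hp5 : 5 ≤ p) {a b N : ℤ} (ha : ¬ (p : ℤ) ∣ a)
    (hN : ∀ y : ℤ, 2 * |y| ≤ p → a * y ^ 2 + b * y ≤ N) :
    ∃ y, IsMixedSum (N - (a * y ^ 2 + b * y)) := by
  have hprime : p.Prime := Fact.out
  have hp3 : ¬ 3 ∣ p := by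
    rw [Nat.prime_dvd_prime_iff_eq Nat.prime_three hprime]; lia
  have hcard : Fintype.card (ZMod p) % 2 = 1 := by
    rw [ZMod.card]; exact hprime.eq_two_or_odd.resolve_left (by lia)
  have h3a : (3 * a : ZMod p) ≠ 0 := by
    refine mul_ne_zero ?_ ((ZMod.intCast_zmod_eq_zero_iff_dvd a p).not.mpr ha)
    refine (ZMod.natCast_eq_zero_iff 3 p).not.mpr fun h ↦ ?_
    exact absurd (Nat.le_of_dvd three_pos h) (by lia)
  obtain ⟨y, hy⟩ := exists_isSquare_quadratic hcard h3a (3 * b) (-(3 * N + 4))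
  refine ⟨y.valMinAbs, hp.isMixedSum hp3 (sub_nonneg.mpr (hN _ ?_)) ?_⟩
  · have := y.natAbs_valMinAbs_le
    rw [Int.abs_eq_natAbs]
    lia
  · convert hy using 1
    push_cast [ZMod.coe_valMinAbs]
    ring

lemma isMixedSum_of_lt {N : ℤ} (hN : 0 ≤ N) (hlt : N < 1190) (hne : N ≠ 18) : IsMixedSum N := by
  by_cases h7 : IsSquare (-(3 * N + 4) : ZMod 7)
  · exact hasReflections_seven.isMixedSum (by norm_num) hN h7
  by_cases h11 : IsSquare (-(3 * N + 4) : ZMod 11)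
  · exact hasReflections_eleven.isMixedSum (by norm_num) hN h11
  have hsearch : ∀ N ∈ Finset.Ico (0 : ℤ) 1190, ¬ IsSquare (-(3 * N + 4) : ZMod 7) →
      ¬ IsSquare (-(3 * N + 4) : ZMod 11) → N ≠ 18 →
      ∃ t ∈ Finset.Icc (-4 : ℤ) 4, ∃ z ∈ Finset.Icc (-17 : ℤ) 17,
        IsSquare (N - octagonal z - 3 * octagonal t) := by
    decide +kernel
  obtain ⟨t, -, z, -, x, hx⟩ := hsearch N (Finset.mem_Ico.mpr ⟨hN, hlt⟩) h7 h11 hne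
  exact ⟨x, z, t, by linarith⟩

/-! ### The quaternary sums -/

lemma mul_quadratic_le {α d e y k : ℤ} (hα : 0 ≤ α) (hd : d ≤ 3) (he : |e| ≤ 2)
    (hy : |y| ≤ k) : α * (d * y ^ 2 + e * y) ≤ α * (3 * k ^ 2 + 2 * k) := by
  have hsq : d * y ^ 2 ≤ 3 * k ^ 2 := by
    rw [← sq_abs y]
    gcongr
  have hlin : e * y ≤ 2 * k :=
    (le_abs_self _).trans ((abs_mul e y).trans_le (by gcongr))
  gcongr

lemma exists_isMixedSum_sub_mul_of_le {α N d e : ℤ} (hα : 1 ≤ α) (hα' : α ≤ 18)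
    (hN : 1190 ≤ N) (hd : 1 ≤ d) (hd' : d ≤ 3) (he : |e| ≤ 2) :
    ∃ y, IsMixedSum (N - α * (d * y ^ 2 + e * y)) := by
  have hexpand (y : ℤ) : α * (d * y ^ 2 + e * y) = α * d * y ^ 2 + α * e * y := by ring
  have hbound {y k : ℤ} (hy : |y| ≤ k) :=
    mul_quadratic_le (by lia : 0 ≤ α) hd' he hy
  simp only [hexpand] at hbound ⊢
  -- For `7 ∣ α` we have `α ≤ 14`, and `|y| ≤ 5` bounds the shift by `14 * 85 = 1190`.
  by_cases h7 : 7 ∣ α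
  · have : Fact (Nat.Prime 11) := ⟨by norm_num⟩
    refine hasReflections_eleven.exists_isMixedSum_sub (by norm_num) ?_ fun y hy ↦ ?_
    · have : d = 1 ∨ d = 2 ∨ d = 3 := by lia
      grind
    · have := hbound (y := y) (k := 5) (by lia)
      lia
  · have : Fact (Nat.Prime 7) := ⟨by norm_num⟩
    refine hasReflections_seven.exists_isMixedSum_sub (by norm_num) ?_ fun y hy ↦ ?_
    · have : d = 1 ∨ d = 2 ∨ d = 3 := by lia
      grind
    · have := hbound (y := y) (k := 3) (by lia)
      lia

lemma exists_isMixedSum_sub_mul {α N d e : ℤ} (hα : 1 ≤ α) (hα' : α ≤ 18) (hN : 0 ≤ N)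
    (hd : 1 ≤ d) (hd' : d ≤ 3) (he : |e| ≤ 2) (hde : d + e = 1) :
    ∃ y, IsMixedSum (N - α * (d * y ^ 2 + e * y)) := by
  rcases le_or_gt 1190 N with hlarge | hsmall
  · exact exists_isMixedSum_sub_mul_of_le hα hα' hlarge hd hd' he
  by_cases h18 : N = 18
  · refine ⟨1, ?_⟩
    rw [one_pow, mul_one, mul_one, hde, mul_one]
    exact isMixedSum_of_lt (by lia) (by lia) (by lia)
  · refine ⟨0, isMixedSum_of_lt ?_ ?_ ?_⟩ <;> simpa

theorem universal_case_4_15_general :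
    (∀ α : ℤ, 1 ≤ α → α ≤ 18 → ∀ N : ℤ, 0 ≤ N →
      ∃ x y z t : ℤ,
        x ^ 2 + α * y ^ 2 + (3 * z ^ 2 - 2 * z) + 3 * (3 * t ^ 2 - 2 * t) = N) ∧
    (∀ β : ℤ, 1 ≤ β → β ≤ 18 → ∀ N : ℤ, 0 ≤ N →
      ∃ x y z t : ℤ,
        x ^ 2 + (3 * y ^ 2 - 2 * y) + 3 * (3 * z ^ 2 - 2 * z) +
          β * (3 * t ^ 2 - 2 * t) = N) := by
  refine ⟨fun α hα hα' N hN ↦ ?_, fun β hβ hβ' N hN ↦ ?_⟩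
  · obtain ⟨y, x, z, t, h⟩ := exists_isMixedSum_sub_mul (d := 1) (e := 0) hα hα' hN
      (by norm_num) (by norm_num) (by norm_num) (by norm_num)
    exact ⟨x, y, z, t, by unfold octagonal at h; linarith⟩
  · obtain ⟨t, x, y, z, h⟩ := exists_isMixedSum_sub_mul (d := 3) (e := -2) hβ hβ' hN
      (by norm_num) (by norm_num) (by norm_num) (by norm_num)
    exact ⟨x, y, z, t, by unfold octagonal at h; linarith⟩

theorem universal_case_4_15 :
    (∀ α : ℤ, 4 ≤ α → α ≤ 18 → ∀ N : ℤ, 0 ≤ N →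
      ∃ x y z t : ℤ,
        x ^ 2 + α * y ^ 2 + (3 * z ^ 2 - 2 * z) + 3 * (3 * t ^ 2 - 2 * t) = N) ∧
    (∀ β : ℤ, 3 ≤ β → β ≤ 18 → ∀ N : ℤ, 0 ≤ N →
      ∃ x y z t : ℤ,
        x ^ 2 + (3 * y ^ 2 - 2 * y) + 3 * (3 * z ^ 2 - 2 * z) +
          β * (3 * t ^ 2 - 2 * t) = N) :=
  ⟨fun α hα ↦ universal_case_4_15_general.1 α (by lia),
    fun β hβ ↦ universal_case_4_15_general.2 β (by lia)⟩
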